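/- arXiv:2605.17157 — 2 statements merged into one kernel-verified Lean document; each statement's English description precedes it below -/
import Mathlib

section
/- (Main Lemma) The set D_Δ(p,u) = {b − a : (a,b) ∈ D(p,u)} equals {r_{i−1} − z·r_i : 1 ≤ i ≤ t and 0 ≤ z ≤ Z_i − 1}. -/
/-!
Translation and reflection reduce condition (4) to record minima: `d` is a difference iff
`⟨±ud⟩_p < ⟨±un⟩_p` for all `0 < n < d`, for one of the two signs. Record minima are read off bases
`(x, e)`, `(y, -f)` of the lattice `{(n, m) : m ≡ vn mod p}` whose vectors lie on either side of the
horizontal axis: then `x` is a record for `v`, no integer strictly between `x` and `x + y` is one,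
and by symmetry no integer strictly between `max x y` and `x + y` is a record for `v` or `-v`. One
subtractive step of the Euclidean algorithm replaces `(x, e)` by `(x - y, e + f)`, so the bases
reached from `(p, 0)`, `(r₁, -1)` exhibit exactly the numbers `r_{i-1} - z r_i` as records and
exclude everything in between.
-/

/-- `(a, b)` satisfies condition (4): the residues `⟨ua⟩_p` and `⟨ub⟩_p` lie below all those
strictly in between. -/
def IsLowPair (p u a b : ℤ) : Prop :=
  a < b ∧ ∀ n : ℤ, a < n → n < b → max ((u * a) % p) ((u * b) % p) < (u * n) % p

/-- The set `D_Δ(p,u)` of differences of pairs satisfying condition (4). -/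
def differenceSet (p u : ℤ) : Set ℤ :=
  {d | ∃ a b : ℤ, IsLowPair p u a b ∧ d = b - a}

/-- `d` is a record minimum of the sequence of residues `⟨vn⟩_p`, `n = 1, 2, …`. -/
def IsRecordMin (p v d : ℤ) : Prop :=
  0 < d ∧ ∀ n : ℤ, 0 < n → n < d → (v * d) % p < (v * n) % p

/-- The vectors `(x, e)` and `(y, -f)` form an oriented basis of the lattice
`{(n, m) : m ≡ vn mod p}`, which has covolume `p`. The sign of the second ordinate makes `e` and
`f` both nonnegative when the vectors lie on either side of the horizontal axis. -/
structure IsLatticeBasis (p v x e y f : ℤ) : Prop where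
  modEq_left : v * x ≡ e [ZMOD p]
  modEq_right : v * y ≡ -f [ZMOD p]
  det_eq : x * f + y * e = p

/-- `r` is a sequence of remainders with quotients `Z` for `t` division steps of the Euclidean
algorithm; the quotient `Z (j + 1)` is the one obtained on dividing by `r (j + 1)`. -/
structure IsEuclideanSequence (r Z : ℕ → ℤ) (t : ℕ) : Prop where
  rem_one_lt : r 1 < r 0
  div_eq : ∀ j < t, r j = Z (j + 1) * r (j + 1) + r (j + 2)
  rem_nonneg : ∀ j < t, 0 ≤ r (j + 2)
  rem_lt : ∀ j < t, r (j + 2) < r (j + 1)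

theorem exists_mem_Ioc_succ {α : Type*} [LinearOrder α] {f : ℕ → α} {k : ℕ} {a : α}
    (ha : a ∈ Set.Ioc (f k) (f 0)) : ∃ j < k, a ∈ Set.Ioc (f (j + 1)) (f j) := by
  obtain ⟨j, hj, hj_succ⟩ := Nat.exists_not_and_succ_of_not_zero_of_exists
    (p := fun i => f (min i k) < a) (by simpa using ha.2) ⟨k, by simpa using ha.1⟩
  have hjk : j < k := by
    by_contra! hkj
    exact hj (by simpa [hkj, hkj.trans j.le_succ] using hj_succ)
  exact ⟨j, hjk, by simpa [Nat.min_eq_left hjk] using hj_succ, by simpa [hjk.le] using hj⟩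

section Residues

variable {p a b m : ℤ}

theorem sub_emod_eq_of_emod_le (hp : 0 < p) (h : b % p ≤ a % p) :
    (a - b) % p = a % p - b % p := by
  rw [Int.sub_emod]
  exact Int.emod_eq_of_lt (sub_nonneg.mpr h)
    (by linarith [Int.emod_lt_of_pos a hp, Int.emod_nonneg b hp.ne'])

theorem emod_le_of_modEq (h : a ≡ m [ZMOD p]) (hp : 0 ≤ p) (hm : 0 ≤ m) : a % p ≤ m := by
  rw [h.eq, Int.emod_def]
  exact sub_le_self m (mul_nonneg hp (Int.ediv_nonneg hm hp))

end Residues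

section Differences

variable {p u a b d : ℤ}

theorem IsLowPair.neg (h : IsLowPair p u a b) : IsLowPair p (-u) (-b) (-a) := by
  refine ⟨neg_lt_neg h.1, fun n hbn hna => ?_⟩
  have key := h.2 (-n) (by linarith) (by linarith)
  rwa [max_comm, ← neg_mul_comm, ← neg_mul_neg u a, ← neg_mul_neg u b] at key

theorem differenceSet_neg (p u : ℤ) : differenceSet p (-u) = differenceSet p u := by
  have subset_neg (w : ℤ) : differenceSet p w ⊆ differenceSet p (-w) := by
    rintro _ ⟨a, b, h, rfl⟩
    exact ⟨-b, -a, h.neg, by ring⟩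
  exact (subset_neg (-u)).trans_eq (by rw [neg_neg]) |>.antisymm (subset_neg u)

theorem differenceSet_neg_one_pow_mul (p u : ℤ) (k : ℕ) :
    differenceSet p ((-1) ^ k * u) = differenceSet p u := by
  rcases neg_one_pow_eq_or ℤ k with h | h <;> simp [h, differenceSet_neg]

theorem IsLowPair.isRecordMin (h : IsLowPair p u a b) (hp : 0 < p)
    (hab : (u * a) % p ≤ (u * b) % p) : IsRecordMin p u (b - a) := by
  refine ⟨sub_pos.mpr h.1, fun n hn hnd => ?_⟩
  obtain ⟨ha, hb⟩ := max_lt_iff.mp (h.2 (a + n) (by linarith) (by linarith))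
  have shift : u * n = u * (a + n) - u * a := by ring
  rw [shift, mul_sub, sub_emod_eq_of_emod_le hp hab, sub_emod_eq_of_emod_le hp ha.le]
  exact sub_lt_sub_right hb _

theorem IsRecordMin.isLowPair (h : IsRecordMin p u d) (hp : 0 < p) : IsLowPair p u 0 d := by
  refine ⟨h.1, fun n hn hnd => ?_⟩
  rw [mul_zero, Int.zero_emod, max_eq_right (Int.emod_nonneg _ hp.ne')]
  exact h.2 n hn hnd

theorem IsRecordMin.mem_differenceSet (h : IsRecordMin p u d) (hp : 0 < p) :
    d ∈ differenceSet p u :=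
  ⟨0, d, h.isLowPair hp, (sub_zero d).symm⟩

theorem isRecordMin_or_neg_of_mem_differenceSet (hp : 0 < p) (h : d ∈ differenceSet p u) :
    IsRecordMin p u d ∨ IsRecordMin p (-u) d := by
  obtain ⟨a, b, hab, rfl⟩ := h
  refine (le_total ((u * a) % p) ((u * b) % p)).imp (hab.isRecordMin hp) fun hba => ?_
  simpa only [neg_sub_neg] using hab.neg.isRecordMin hp (by simpa only [neg_mul_neg] using hba)

theorem IsRecordMin.le_modulus (h : IsRecordMin p u d) (hp : 0 < p) : d ≤ p := by
  by_contra! hpd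
  have hlt := h.2 p hp hpd
  rw [Int.mul_emod_left] at hlt
  exact hlt.not_ge (Int.emod_nonneg _ hp.ne')

theorem pos_and_le_of_mem_differenceSet (hp : 0 < p) (h : d ∈ differenceSet p u) :
    0 < d ∧ d ≤ p := by
  rcases isRecordMin_or_neg_of_mem_differenceSet hp h with h | h <;> exact ⟨h.1, h.le_modulus hp⟩

end Differences

namespace IsLatticeBasis

variable {p v x e y f d : ℤ}

theorem symm (h : IsLatticeBasis p v x e y f) : IsLatticeBasis p (-v) y f x e where
  modEq_left := by simpa only [neg_mul, neg_neg] using h.modEq_right.neg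
  modEq_right := by simpa only [neg_mul] using h.modEq_left.neg
  det_eq := by rw [add_comm, h.det_eq]

theorem sub_mul (h : IsLatticeBasis p v x e y f) (z : ℤ) :
    IsLatticeBasis p v (x - z * y) (e + z * f) y f where
  modEq_left := by
    have key := h.modEq_left.sub (h.modEq_right.mul_left z)
    convert key using 1 <;> ring
  modEq_right := h.modEq_right
  det_eq := by linear_combination h.det_eq

theorem exists_coords (h : IsLatticeBasis p v x e y f) (hp : p ≠ 0) {n m : ℤ}
    (hm : v * n ≡ m [ZMOD p]) : ∃ α β : ℤ, n = α * x + β * y ∧ m = α * e - β * f := by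
  obtain ⟨A, hA⟩ := h.modEq_left.dvd
  obtain ⟨B, hB⟩ := h.modEq_right.dvd
  obtain ⟨C, hC⟩ := hm.dvd
  -- Cramer's rule: both determinants are divisible by `p`.
  have hα : n * f + m * y = p * (y * C - n * B) := by linear_combination y * hC - n * hB
  have hβ : n * e - m * x = p * (n * A - x * C) := by linear_combination n * hA - x * hC
  refine ⟨y * C - n * B, n * A - x * C, mul_left_cancel₀ hp ?_, mul_left_cancel₀ hp ?_⟩
  · linear_combination x * hα + y * hβ - n * h.det_eq
  · linear_combination e * hα - f * hβ - m * h.det_eq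

theorem modulus_pos (h : IsLatticeBasis p v x e y f) (hx : 0 < x) (hy : 0 ≤ y) (he : 0 ≤ e)
    (hf : 0 < f) : 0 < p := by
  rw [← h.det_eq]
  positivity

theorem isRecordMin_left (h : IsLatticeBasis p v x e y f) (hx : 0 < x) (hy : 0 < y)
    (he : 0 ≤ e) (hf : 0 < f) : IsRecordMin p v x := by
  have hp := h.modulus_pos hx hy.le he hf
  refine ⟨hx, fun n hn hnx => ?_⟩
  by_contra! hle
  replace hle := hle.trans (emod_le_of_modEq h.modEq_left hp.le he)
  have hm := Int.emod_nonneg (v * n) hp.ne'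
  obtain ⟨α, β, hn_eq, hαβ⟩ := h.exists_coords hp.ne' (Int.mod_modEq (v * n) p).symm
  rw [hαβ] at hle hm
  rcases le_or_gt α 0 with hα | hα
  · have hβ : 0 < β := by nlinarith
    have hlow : α * e - β * f < 0 := by nlinarith
    exact hlow.not_ge hm
  · have hβ : β < 0 := by nlinarith
    have hhigh : e < α * e - β * f := by nlinarith
    exact hhigh.not_ge hle

theorem not_isRecordMin (h : IsLatticeBasis p v x e y f) (hx : 0 < x) (hy : 0 < y)
    (he : 0 ≤ e) (hf : 0 < f) (hxd : x < d) (hd : d < x + y) :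
    ¬ IsRecordMin p v d := by
  intro hrec
  have hp := h.modulus_pos hx hy.le he hf
  have hlt := (hrec.2 x hx hxd).trans_le (emod_le_of_modEq h.modEq_left hp.le he)
  have hm := Int.emod_nonneg (v * d) hp.ne'
  obtain ⟨α, β, hd_eq, hαβ⟩ := h.exists_coords hp.ne' (Int.mod_modEq (v * d) p).symm
  rw [hαβ] at hlt hm
  rcases le_or_gt α 0 with hα | hα
  · have hβ : 0 < β := by nlinarith
    have hlow : α * e - β * f < 0 := by nlinarith
    exact hlow.not_ge hm
  rcases le_or_gt β 0 with hβ | hβ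
  · have hhigh : e ≤ α * e - β * f := by nlinarith
    exact hhigh.not_gt hlt
  · have hfar : x + y ≤ d := by nlinarith
    exact hfar.not_gt hd

theorem notMem_differenceSet (h : IsLatticeBasis p v x e y f) (hx : 0 < x) (hy : 0 < y)
    (he : 0 < e) (hf : 0 < f) (hxd : x < d) (hyd : y < d) (hd : d < x + y) :
    d ∉ differenceSet p v := by
  intro hmem
  rcases isRecordMin_or_neg_of_mem_differenceSet (h.modulus_pos hx hy.le he.le hf) hmem with
    hrec | hrec
  · exact h.not_isRecordMin hx hy he.le hf hxd hd hrec
  · exact h.symm.not_isRecordMin hy hx hf.le he hyd (by rwa [add_comm]) hrec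

theorem sub_mul_mem_differenceSet (h : IsLatticeBasis p v x e y f) (hy : 0 < y) (he : 0 ≤ e)
    (hf : 0 < f) {z : ℤ} (hz : 0 ≤ z) (hpos : 0 < x - z * y) :
    x - z * y ∈ differenceSet p v := by
  have he' : 0 ≤ e + z * f := add_nonneg he (mul_nonneg hz hf.le)
  exact ((h.sub_mul z).isRecordMin_left hpos hy he' hf).mem_differenceSet
    ((h.sub_mul z).modulus_pos hpos hy.le he' hf)

theorem dvd_sub_of_mem_differenceSet (h : IsLatticeBasis p v x e y f) (hy : 0 < y) (he : 0 ≤ e)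
    (hf : 0 < f) (hyd : y < d) (hdx : d ≤ x) (hmem : d ∈ differenceSet p v) : y ∣ x - d := by
  by_contra hndvd
  set z := (x - d) / y
  have hz : 0 ≤ z := Int.ediv_nonneg (sub_nonneg.mpr hdx) hy.le
  have hlower : z * y < x - d :=
    (Int.ediv_mul_le _ hy.ne').lt_of_ne fun heq => hndvd ⟨z, by rw [← heq, mul_comm]⟩
  have hupper : x - d < (z + 1) * y := Int.lt_ediv_add_one_mul_self _ hy
  have he' : 0 < e + (z + 1) * f :=
    add_pos_of_nonneg_of_pos he (mul_pos (Int.lt_add_one_of_le hz) hf)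
  -- `d` falls into the gap that the basis reached after `z + 1` subtractive steps leaves.
  exact (h.sub_mul (z + 1)).notMem_differenceSet (by linarith) hy he' hf
    (by linarith) hyd (by linarith) hmem

end IsLatticeBasis

namespace IsEuclideanSequence

variable {r Z : ℕ → ℤ} {t : ℕ} {u : ℤ} {j : ℕ}

theorem rem_pos (h : IsEuclideanSequence r Z t) (hj : j < t) : 0 < r (j + 1) :=
  (h.rem_nonneg j hj).trans_lt (h.rem_lt j hj)

theorem rem_succ_lt (h : IsEuclideanSequence r Z t) (hj : j < t) : r (j + 1) < r j := by
  cases j with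
  | zero => exact h.rem_one_lt
  | succ i => exact h.rem_lt i (by lia)

theorem quotient_pos (h : IsEuclideanSequence r Z t) (hj : j < t) : 0 < Z (j + 1) := by
  by_contra! hZ
  nlinarith [h.div_eq j hj, h.rem_lt j hj, h.rem_succ_lt hj, h.rem_pos hj]

theorem exists_isLatticeBasis (h : IsEuclideanSequence r Z t)
    (hu : u * r 1 ≡ 1 [ZMOD r 0]) (hj : j < t) : ∃ e f : ℤ, 0 ≤ e ∧ 0 < f ∧
      IsLatticeBasis (r 0) ((-1) ^ (j + 1) * u) (r j) e (r (j + 1)) f := by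
  induction j with
  | zero =>
    refine ⟨0, 1, le_rfl, one_pos, ?_, ?_, by ring⟩
    · simp [Int.modEq_zero_iff_dvd]
    · simpa using hu.neg
  | succ i ih =>
    obtain ⟨e, f, he, hf, hbasis⟩ := ih (by lia)
    have hZ := h.quotient_pos (j := i) (by lia)
    refine ⟨f, e + Z (i + 1) * f, hf.le, by positivity, ?_⟩
    have hrem : r i - Z (i + 1) * r (i + 1) = r (i + 2) := by
      rw [h.div_eq i (by lia), add_sub_cancel_left]
    have hsign : -((-1) ^ (i + 1) * u) = (-1) ^ (i + 2) * u := by ring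
    simpa only [hrem, hsign] using (hbasis.sub_mul (Z (i + 1))).symm

theorem sub_mul_mem_differenceSet (h : IsEuclideanSequence r Z t)
    (hu : u * r 1 ≡ 1 [ZMOD r 0]) (hj : j < t) {z : ℤ} (hz : 0 ≤ z) (hzZ : z < Z (j + 1)) :
    r j - z * r (j + 1) ∈ differenceSet (r 0) u := by
  obtain ⟨e, f, he, hf, hbasis⟩ := h.exists_isLatticeBasis hu hj
  have hpos : 0 < r j - z * r (j + 1) := by
    nlinarith [h.div_eq j hj, h.rem_nonneg j hj, h.rem_pos hj]
  rw [← differenceSet_neg_one_pow_mul _ u (j + 1)]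
  exact hbasis.sub_mul_mem_differenceSet (h.rem_pos hj) he hf hz hpos

theorem exists_eq_sub_mul_of_mem_Ioc (h : IsEuclideanSequence r Z t)
    (hu : u * r 1 ≡ 1 [ZMOD r 0]) (hj : j < t) {d : ℤ} (hd : d ∈ Set.Ioc (r (j + 1)) (r j))
    (hmem : d ∈ differenceSet (r 0) u) :
    ∃ z : ℤ, 0 ≤ z ∧ z < Z (j + 1) ∧ d = r j - z * r (j + 1) := by
  obtain ⟨e, f, he, hf, hbasis⟩ := h.exists_isLatticeBasis hu hj
  rw [← differenceSet_neg_one_pow_mul _ u (j + 1)] at hmem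
  have hpos := h.rem_pos hj
  obtain ⟨z, hz⟩ := hbasis.dvd_sub_of_mem_differenceSet hpos he hf hd.1 hd.2 hmem
  refine ⟨z, ?_, ?_, by linarith⟩
  · by_contra! hneg
    nlinarith [hd.2]
  · by_contra! hge
    nlinarith [hd.1, h.div_eq j hj, h.rem_lt j hj]

theorem exists_eq_sub_mul_of_mem_differenceSet (h : IsEuclideanSequence r Z t) (ht : 0 < t)
    (hrt : r t = 1) (hu : u * r 1 ≡ 1 [ZMOD r 0]) {d : ℤ} (hmem : d ∈ differenceSet (r 0) u) :
    ∃ j < t, ∃ z : ℤ, 0 ≤ z ∧ z < Z (j + 1) ∧ d = r j - z * r (j + 1) := by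
  have hr0 : 0 < r 0 := (h.rem_pos ht).trans h.rem_one_lt
  obtain ⟨hd_pos, hd_le⟩ := pos_and_le_of_mem_differenceSet hr0 hmem
  rcases (show 1 ≤ d from hd_pos).eq_or_lt with rfl | hd_one
  · obtain ⟨j, rfl⟩ := Nat.exists_eq_add_of_le' ht
    have hdiv := h.div_eq j j.lt_succ_self
    have hnonneg := h.rem_nonneg j j.lt_succ_self
    have hlt := h.rem_lt j j.lt_succ_self
    have hZ := h.quotient_pos j.lt_succ_self
    rw [hrt] at hdiv hlt
    refine ⟨j, j.lt_succ_self, Z (j + 1) - 1, by linarith, by linarith, ?_⟩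
    rw [hrt]
    linarith
  · obtain ⟨j, hj, hd⟩ := exists_mem_Ioc_succ (f := r) ⟨hrt.trans_lt hd_one, hd_le⟩
    exact ⟨j, hj, h.exists_eq_sub_mul_of_mem_Ioc hu hj hd hmem⟩

end IsEuclideanSequence

/-- Main Lemma: `D_Δ(p,u) = {b - a : (a,b) ∈ D(p,u)}` equals
`{r_{i-1} - z·r_i : 1 ≤ i ≤ t, 0 ≤ z ≤ Z_i - 1}`, where `(r_i)` and `(Z_i)` are the
Euclidean algorithm sequences for `p` and `r₁` (the inverse of `u` mod `p`). -/
theorem stmt_1 (p u : ℤ) (hp : 3 ≤ p) (hpu : IsCoprime u p)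
    (t : ℕ) (ht : 1 ≤ t) (r Z : ℕ → ℤ)
    (hr0 : r 0 = p) (hr1pos : 0 < r 1) (hr1lt : r 1 < p) (hur1 : (u * r 1) % p = 1)
    (hrec : ∀ i, 1 ≤ i → i ≤ t →
      r (i - 1) = Z i * r i + r (i + 1) ∧ 0 ≤ r (i + 1) ∧ r (i + 1) < r i)
    (hrt : r t = 1) :
    {d : ℤ | ∃ a b : ℤ, (a < b ∧ ∀ n : ℤ, a < n → n < b →
        max ((u * a) % p) ((u * b) % p) < (u * n) % p) ∧ d = b - a} =
    {d : ℤ | ∃ i : ℕ, 1 ≤ i ∧ i ≤ t ∧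
        ∃ z : ℤ, 0 ≤ z ∧ z ≤ Z i - 1 ∧ d = r (i - 1) - z * r i} := by
  have h : IsEuclideanSequence r Z t :=
    { rem_one_lt := hr0 ▸ hr1lt
      div_eq := fun j hj => (hrec (j + 1) j.succ_pos hj).1
      rem_nonneg := fun j hj => (hrec (j + 1) j.succ_pos hj).2.1
      rem_lt := fun j hj => (hrec (j + 1) j.succ_pos hj).2.2 }
  have hu : u * r 1 ≡ 1 [ZMOD r 0] := by
    rw [hr0, Int.ModEq, hur1, Int.emod_eq_of_lt one_pos.le (by linarith)]
  change differenceSet p u = _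
  rw [← hr0]
  refine Set.Subset.antisymm (fun d hd => ?_) ?_
  · obtain ⟨j, hj, z, hz, hzZ, rfl⟩ := h.exists_eq_sub_mul_of_mem_differenceSet ht hrt hu hd
    exact ⟨j + 1, j.succ_pos, hj, z, hz, Int.le_sub_one_of_lt hzZ, rfl⟩
  · rintro _ ⟨i, hi, hit, z, hz, hzZ, rfl⟩
    obtain ⟨j, rfl⟩ := Nat.exists_eq_add_of_le' hi
    exact h.sub_mul_mem_differenceSet hu hit hz (Int.lt_of_le_sub_one hzZ)
end

section
/- (Theorem 1(ii)) S_Δ(p,q) = {r_{i−1} − z·r_i : 1 ≤ i ≤ t and 0 ≤ z ≤ Z_i − 1}. -/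
/-!
Successive elements `m < n` of `⟨p, q⟩` with `m = a * q + b * p` and `n = a' * q + b' * p` have
`n - m ≡ (a' - a) * q` modulo `p`. That no element lies between them says that `n - m` is the least
positive residue modulo `p` among the multiples `v * (± q)` with `0 ≤ v ≤ |a' - a|`, the sign being
that of `a' - a`. So the gaps are the record lows of the residues of the multiples of `q` and `-q`.

These records are computed by the Euclidean algorithm. At each stage two remainders `x ≤ y` satisfy
`x ≡ A * c` and `y ≡ -B * c` for some `c = ± q`, with `x * B + y * A = p`. By this determinant,
`(x, -A)` and `(y, B)` form a basis of the lattice of pairs `(e, v)` with `e ≡ -v * c` modulo `p`.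
Reading off coordinates in this basis shows that `y` is a record of `-c`, reached at time `B`, and
that the next smaller record of `-c` is `y - x`, reached at time `A + B`.
-/

open Set

section Gaps

variable {α : Type*}

/-- The set of differences between successive elements of `S`; successive elements are encoded
by the covering relation of the subtype. -/
def gapSet [Sub α] [Preorder α] (S : Set α) : Set α :=
  {d | ∃ m n : S, m ⋖ n ∧ (n : α) - m = d}

theorem gapSet_image_Iic [Sub α] [Preorder α] {f : ℕ → α} {N : ℕ}
    (hf : StrictMonoOn f (Iic N)) :
    gapSet (f '' Iic N) = {d | ∃ j < N, d = f (j + 1) - f j} := by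
  have hsurj := (hf.orderIso f (Iic N)).surjective
  have hcovBy (i j : Iic N) : i ⋖ j ↔ (j : ℕ) = i + 1 := by
    rw [← OrdConnected.apply_covBy_apply_iff (OrderEmbedding.subtype (· ∈ Iic N))
      (Subtype.range_coe ▸ ordConnected_Iic), Order.covBy_iff_add_one_eq, eq_comm]
    rfl
  ext d
  simp only [gapSet, hsurj.exists, apply_covBy_apply_iff, hcovBy, mem_ofPred_eq]
  constructor
  · rintro ⟨⟨i, -⟩, ⟨_, hj⟩, rfl, rfl⟩
    exact ⟨i, hj, rfl⟩
  · rintro ⟨j, hj, rfl⟩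
    exact ⟨⟨j, hj.le⟩, ⟨j + 1, hj⟩, rfl, rfl⟩

variable [AddCommGroup α] [PartialOrder α] [IsOrderedAddMonoid α] {S I : Set α} {d p : α}

theorem mem_gapSet_iff :
    d ∈ gapSet S ↔ 0 < d ∧ ∃ m ∈ S, m + d ∈ S ∧ ∀ e, 0 < e → e < d → m + e ∉ S := by
  constructor
  · rintro ⟨⟨m, hm⟩, ⟨n, hn⟩, ⟨hlt, hno⟩, rfl⟩
    refine ⟨sub_pos.2 hlt, m, hm, by simpa using hn, fun e he hed hme => ?_⟩
    exact hno (c := ⟨m + e, hme⟩) (lt_add_of_pos_right m he) (lt_sub_iff_add_lt'.1 hed)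
  · rintro ⟨hd, m, hm, hmd, hno⟩
    refine ⟨⟨m, hm⟩, ⟨m + d, hmd⟩, ⟨lt_add_of_pos_right m hd, ?_⟩, add_sub_cancel_left m d⟩
    rintro ⟨x, hx⟩ hmx hxd
    exact hno (x - m) (sub_pos.2 hmx) (sub_lt_iff_lt_add'.2 hxd) (by simpa using hx)

theorem gapSet_inter_subset (hI : I.OrdConnected) : gapSet (S ∩ I) ⊆ gapSet S := by
  intro d hd
  obtain ⟨hd, m, hm, hmd, hno⟩ := mem_gapSet_iff.1 hd
  refine mem_gapSet_iff.2 ⟨hd, m, hm.1, hmd.1, fun e he hed hme => hno e he hed ⟨hme, ?_⟩⟩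
  exact hI.out hm.2 hmd.2 ⟨le_add_of_nonneg_right he.le, by gcongr⟩

end Gaps

/-- The numerical semigroup `⟨p, q⟩`, as a set of integers. -/
def pairSemigroup (p q : ℤ) : Set ℤ :=
  {m | ∃ a b : ℤ, 0 ≤ a ∧ 0 ≤ b ∧ m = a * q + b * p}

/-- `d` is a record low of the positive residues modulo `p` of the multiples of `c`, reached at
time `u`: it is a residue of `u * c`, and no smaller positive number is a residue of `v * c` for
some `0 ≤ v ≤ u`. Residues are taken in `1, …, p`, so that `p` is the record at time `0`. -/
structure IsResidueRecord (p c d u : ℤ) : Prop where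
  pos : 0 < d
  time_nonneg : 0 ≤ u
  modEq : u * c ≡ d [ZMOD p]
  not_modEq : ∀ e v, 0 < e → e < d → 0 ≤ v → v ≤ u → ¬ v * c ≡ e [ZMOD p]

/-- A stage of the Euclidean algorithm modulo `p`: the remainders `x` and `y` are residues of
`A * c` and `B * (-c)`, and the vectors `(x, -A)`, `(y, B)` have determinant `p`. -/
structure EuclidState (p c x y A B : ℤ) : Prop where
  modEq_left : A * c ≡ x [ZMOD p]
  modEq_right : B * -c ≡ y [ZMOD p]
  det : x * B + y * A = p
  left_pos : 1 ≤ A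
  right_nonneg : 0 ≤ B

/-- `r 0, …, r t` are the nonzero remainders `p, q % p, …, 1` of the Euclidean algorithm applied
to `q` and `p`. -/
structure IsRemainderSeq (p q : ℤ) (r : ℕ → ℤ) (t : ℕ) : Prop where
  zero : r 0 = p
  one : r 1 = q % p
  add_two : ∀ k < t, r (k + 2) = r k % r (k + 1)
  pos : ∀ k ≤ t, 0 < r k
  last : r t = 1

/-- The values taken by the remainders `r 0, …, r t` when each division is carried out by repeated
subtraction. -/
def subtractiveRemainders (r : ℕ → ℤ) (t : ℕ) : Set ℤ :=
  {d | ∃ k < t, ∃ z, 0 ≤ z ∧ z < r k / r (k + 1) ∧ d = r k - z * r (k + 1)}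

variable {p q c d u x y A B : ℤ} {r : ℕ → ℤ} {t k : ℕ}

theorem mem_pairSemigroup_of_modEq {a m : ℤ} (hp : 0 < p) (ha : 0 ≤ a)
    (hmod : a * q ≡ m [ZMOD p]) (hlt : a * q < m + p) : m ∈ pairSemigroup p q := by
  obtain ⟨b, hb⟩ := hmod.dvd
  have hb0 : -1 < b := lt_of_mul_lt_mul_left (by linarith) hp.le
  exact ⟨a, b, ha, by omega, by linarith⟩

theorem le_of_mem_gapSet_pairSemigroup (hp : 0 < p) (hd : d ∈ gapSet (pairSemigroup p q)) :
    d ≤ p := by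
  obtain ⟨-, m, ⟨a, b, ha, hb, rfl⟩, -, hno⟩ := mem_gapSet_iff.1 hd
  by_contra! hpd
  exact hno p hp hpd ⟨a, b + 1, ha, by omega, by ring⟩

theorem exists_isResidueRecord_of_mem_gapSet (hp : 0 < p) (hq : 0 ≤ q)
    (hd : d ∈ gapSet (pairSemigroup p q)) :
    (∃ u, 1 ≤ u ∧ IsResidueRecord p q d u) ∨ ∃ u, IsResidueRecord p (-q) d u := by
  have hdp := le_of_mem_gapSet_pairSemigroup hp hd
  obtain ⟨hd0, _, ⟨a, b, ha, hb, rfl⟩, ⟨a', b', ha', hb', hn⟩, hno⟩ := mem_gapSet_iff.1 hd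
  have hbp : 0 ≤ b * p := by positivity
  have hbp' : 0 ≤ b' * p := by positivity
  rcases lt_or_ge a a' with haa' | haa'
  · refine .inl ⟨a' - a, by omega, hd0, by omega, ?_, fun e v he hed hv hvu hmod => ?_⟩
    · exact Int.modEq_iff_dvd.2 ⟨b' - b, by linarith⟩
    · have hle : (a + v) * q ≤ a' * q := by gcongr; omega
      refine hno e he hed (mem_pairSemigroup_of_modEq (a := a + v) hp (by omega) ?_ (by linarith))
      obtain ⟨n, hn⟩ := hmod.dvd
      exact Int.modEq_iff_dvd.2 ⟨b + n, by linarith⟩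
  · refine .inr ⟨a - a', hd0, by omega, ?_, fun e v he hed hv hvu hmod => ?_⟩
    · exact Int.modEq_iff_dvd.2 ⟨b' - b, by linarith⟩
    · have hle : (a - v) * q ≤ a * q := by gcongr; omega
      refine hno e he hed (mem_pairSemigroup_of_modEq (a := a - v) hp (by omega) ?_ (by linarith))
      obtain ⟨n, hn⟩ := hmod.dvd
      exact Int.modEq_iff_dvd.2 ⟨b + n, by linarith⟩

namespace IsResidueRecord

theorem le_modulus (hp : 0 < p) (h : IsResidueRecord p c d u) : d ≤ p := by
  by_contra! hpd
  exact h.not_modEq p 0 hp hpd le_rfl h.time_nonneg (by simp [Int.ModEq])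

theorem le_emod (h : IsResidueRecord p c d u) (hu : 1 ≤ u) (hc : 0 < c % p) : d ≤ c % p := by
  by_contra! hcd
  exact h.not_modEq (c % p) 1 hc hcd zero_le_one hu (by simp [Int.ModEq])

theorem neg_of_time_zero (h : IsResidueRecord p c d 0) : IsResidueRecord p (-c) d 0 where
  pos := h.pos
  time_nonneg := le_rfl
  modEq := by simpa using h.modEq
  not_modEq e v he hed hv hv0 := by
    obtain rfl : v = 0 := le_antisymm hv0 hv
    simpa using h.not_modEq e 0 he hed le_rfl le_rfl

theorem mem_gapSet_of_neg {N : ℤ} (h : IsResidueRecord p (-q) d u) (hp : 0 < p) (hpq : p ≤ q)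
    (hN : u * q + d ≤ N) : d ∈ gapSet (pairSemigroup p q ∩ Icc 0 N) := by
  have hd := h.pos
  have hdp := h.le_modulus hp
  have hu := h.time_nonneg
  have hq : 0 < q := by omega
  have huq : 0 ≤ u * q := by positivity
  refine mem_gapSet_iff.2 ⟨hd, u * q, ⟨⟨u, 0, hu, le_rfl, by ring⟩, huq, by omega⟩,
    ⟨?_, by omega, hN⟩, ?_⟩
  · refine mem_pairSemigroup_of_modEq (a := 0) hp le_rfl ?_ (by linarith)
    obtain ⟨n, hn⟩ := h.modEq.dvd
    exact Int.modEq_iff_dvd.2 ⟨n, by linarith⟩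
  · rintro e he hed ⟨⟨a, b, ha, hb, hab⟩, -⟩
    have hau : a < u + 1 := by
      refine lt_of_mul_lt_mul_right (a := q) ?_ hq.le
      linarith [mul_nonneg hb hp.le]
    exact h.not_modEq e (u - a) he hed (by omega) (by omega)
      (Int.modEq_iff_dvd.2 ⟨b, by linarith⟩)

theorem mem_gapSet {N : ℤ} (h : IsResidueRecord p q d u) (hp : 0 < p) (hpq : p ≤ q)
    (hu : 1 ≤ u) (hN : u * q ≤ N) : d ∈ gapSet (pairSemigroup p q ∩ Icc 0 N) := by
  have hd := h.pos
  have hdp := h.le_modulus hp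
  have hq : 0 < q := by omega
  have hquq : q ≤ u * q := le_mul_of_one_le_left hq.le hu
  refine mem_gapSet_iff.2 ⟨hd, u * q - d, ⟨?_, by omega, by omega⟩,
    ⟨⟨u, 0, by omega, le_rfl, by ring⟩, by omega, by omega⟩, ?_⟩
  · refine mem_pairSemigroup_of_modEq (a := 0) hp le_rfl ?_ (by linarith)
    obtain ⟨n, hn⟩ := h.modEq.dvd
    exact Int.modEq_iff_dvd.2 ⟨-n, by linarith⟩
  · rintro e he hed ⟨⟨a, b, ha, hb, hab⟩, -⟩
    have hau : a < u := by
      refine lt_of_mul_lt_mul_right (a := q) ?_ hq.le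
      linarith [mul_nonneg hb hp.le]
    obtain ⟨n, hn⟩ := h.modEq.dvd
    exact h.not_modEq e a he hed ha hau.le (Int.modEq_iff_dvd.2 ⟨b + n, by linarith⟩)

theorem mem_gapSet_Icc_conductor (h : IsResidueRecord p q d u ∨ IsResidueRecord p (-q) d u)
    (hp : 0 < p) (hpq : p < q) (hud : u + d ≤ p) (hu : u + 2 ≤ p) :
    d ∈ gapSet (pairSemigroup p q ∩ Icc 0 ((p - 1) * (q - 1))) := by
  have hd : 0 < d := h.elim pos pos
  have hu0 : 0 ≤ u := h.elim time_nonneg time_nonneg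
  have hbound : u * q + d ≤ (p - 1) * (q - 1) := by
    rcases (show d = 1 ∨ 2 ≤ d by omega) with rfl | hd2
    · have huq : u * q ≤ (p - 2) * q := by gcongr <;> omega
      linarith
    · have huq : u * q ≤ (p - d) * q := by gcongr <;> omega
      have hdq : 2 * (q - 1) ≤ d * (q - 1) := by gcongr; omega
      linarith
  rcases h with h | h
  · rcases eq_or_lt_of_le hu0 with rfl | hu1
    · exact h.neg_of_time_zero.mem_gapSet_of_neg hp hpq.le hbound
    · exact h.mem_gapSet hp hpq.le hu1 (by omega)
  · exact h.mem_gapSet_of_neg hp hpq.le hbound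

end IsResidueRecord

namespace EuclidState

theorem initial (p q : ℤ) : EuclidState p q (q % p) p 1 0 where
  modEq_left := by simp [Int.ModEq]
  modEq_right := by simp [Int.ModEq]
  det := by ring
  left_pos := le_rfl
  right_nonneg := le_rfl

theorem sub_mul (h : EuclidState p c x y A B) {z : ℤ} (hz : 0 ≤ z) :
    EuclidState p c x (y - z * x) A (B + z * A) where
  modEq_left := h.modEq_left
  modEq_right := by
    convert h.modEq_right.sub (h.modEq_left.mul_left z) using 1
    ring
  det := by linear_combination h.det
  left_pos := h.left_pos
  right_nonneg := add_nonneg h.right_nonneg (mul_nonneg hz (by linarith [h.left_pos]))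

theorem swap (h : EuclidState p c x y A B) (hB : 1 ≤ B) : EuclidState p (-c) y x B A where
  modEq_left := h.modEq_right
  modEq_right := by simpa using h.modEq_left
  det := by linear_combination h.det
  left_pos := hB
  right_nonneg := zero_le_one.trans h.left_pos

theorem emod (h : EuclidState p c x y A B) (hx : 0 < x) (hxy : x ≤ y) :
    EuclidState p (-c) (y % x) x (B + y / x * A) A := by
  have hquot : 1 ≤ y / x := (Int.le_ediv_iff_mul_le hx).2 (by linarith)
  have hstep := h.sub_mul (zero_le_one.trans hquot)
  have hrem : y - y / x * x = y % x := by linarith [Int.emod_add_mul_ediv y x]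
  rw [hrem] at hstep
  exact hstep.swap (by nlinarith [h.left_pos, h.right_nonneg])

theorem exists_coordinates {e v : ℤ} (h : EuclidState p c x y A B) (hp : p ≠ 0)
    (hmod : v * -c ≡ e [ZMOD p]) : ∃ m n, e = m * x + n * y ∧ v = n * B - m * A := by
  obtain ⟨i, hi⟩ := h.modEq_left.dvd
  obtain ⟨j, hj⟩ := h.modEq_right.dvd
  obtain ⟨l, hl⟩ := hmod.dvd
  have hm : e * B - v * y = p * (l * B - v * j) := by linear_combination B * hl - v * hj
  have hn : e * A + v * x = p * (l * A + v * i) := by linear_combination A * hl + v * hi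
  refine ⟨l * B - v * j, l * A + v * i, mul_left_cancel₀ hp ?_, mul_left_cancel₀ hp ?_⟩
  · linear_combination (-e) * h.det + x * hm + y * hn
  · linear_combination (-v) * h.det - A * hm + B * hn

theorem modulus_pos (h : EuclidState p c x y A B) (hx : 0 ≤ x) (hy : 0 < y) : 0 < p := by
  rw [← h.det]
  exact add_pos_of_nonneg_of_pos (mul_nonneg hx h.right_nonneg) (mul_pos hy h.left_pos)

theorem isResidueRecord (h : EuclidState p c x y A B) (hx : 0 ≤ x) (hy : 0 < y) :
    IsResidueRecord p (-c) y B where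
  pos := hy
  time_nonneg := h.right_nonneg
  modEq := h.modEq_right
  not_modEq e v he hey hv hvB hmod := by
    have hp := h.modulus_pos hx hy
    have hA : 0 < A := h.left_pos
    obtain ⟨m, n, rfl, rfl⟩ := h.exists_coordinates hp.ne' hmod
    have hdet : (m * x + n * y) * A + (n * B - m * A) * x = n * p := by
      linear_combination n * h.det
    have hn_pos : 0 < n := by
      refine pos_of_mul_pos_left (b := p) ?_ hp.le
      rw [← hdet]
      positivity
    have hn_lt : n < 1 := by
      refine lt_of_mul_lt_mul_right (a := p) ?_ hp.le
      calc n * p = (m * x + n * y) * A + (n * B - m * A) * x := hdet.symm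
        _ < y * A + (n * B - m * A) * x := by gcongr
        _ ≤ y * A + B * x := by gcongr
        _ = 1 * p := by linear_combination h.det
    omega

theorem eq_of_isResidueRecord (h : EuclidState p c x y A B) (hx : 0 < x) (hxy : x ≤ y)
    (hrec : IsResidueRecord p (-c) d u) (hlt : y - x < d) (hle : d ≤ y) : d = y := by
  have hp := h.modulus_pos hx.le (hx.trans_le hxy)
  have hA : 0 < A := h.left_pos
  have hB := h.right_nonneg
  have hd := hrec.pos
  have hu := hrec.time_nonneg
  obtain ⟨m, n, hdmn, humn⟩ := h.exists_coordinates hp.ne' hrec.modEq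
  have hn : 0 < n := by
    have hnp : n * p = d * A + u * x := by
      linear_combination (-n) * h.det - A * hdmn - x * humn
    refine pos_of_mul_pos_left (b := p) ?_ hp.le
    rw [hnp]
    positivity
  by_contra hne
  have hdy : d < y := lt_of_le_of_ne hle hne
  have hm : m < 0 := by
    by_contra! hm
    linarith [mul_nonneg hm hx.le, le_mul_of_one_le_left (hx.trans_le hxy).le hn]
  have hABu : B + 1 * A ≤ u := by
    calc B + 1 * A ≤ n * B + -m * A := by
          gcongr
          · exact le_mul_of_one_le_left hB hn
          · omega
      _ = u := by linarith
  rcases eq_or_lt_of_le hxy with rfl | hxy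
  · have hmn_pos : 0 < m + n := pos_of_mul_pos_left (b := x) (by linarith) hx.le
    linarith [le_mul_of_one_le_left hx.le hmn_pos]
  · exact hrec.not_modEq (y - 1 * x) (B + 1 * A) (by linarith) (by linarith) (by linarith) hABu
      (h.sub_mul zero_le_one).modEq_right

theorem exists_eq_sub_mul_of_isResidueRecord (h : EuclidState p c x y A B) (hx : 0 < x)
    (hrec : IsResidueRecord p (-c) d u) (hlt : y % x < d) (hle : d ≤ y) :
    ∃ z, 0 ≤ z ∧ z < y / x ∧ d = y - z * x := by
  have hyx := Int.emod_add_mul_ediv y x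
  have hdx := Int.emod_add_mul_ediv (y - d) x
  have hdx_nonneg := Int.emod_nonneg (y - d) hx.ne'
  have hdx_lt := Int.emod_lt_of_pos (y - d) hx
  set z := (y - d) / x
  have hz : 0 ≤ z := Int.ediv_nonneg (by omega) hx.le
  have hzq : z < y / x := lt_of_mul_lt_mul_left (by linarith) hx.le
  have hx_le : x ≤ y - z * x := by
    linarith [(Int.le_ediv_iff_mul_le hx).1 (Int.add_one_le_of_lt hzq)]
  exact ⟨z, hz, hzq,
    (h.sub_mul hz).eq_of_isResidueRecord hx hx_le hrec (by linarith) (by linarith)⟩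

theorem exists_isResidueRecord_time_le (h : EuclidState p c x y A B) (hx : 0 < x) (hy : 0 < y)
    (hp : 3 ≤ p) :
    ∃ u, (IsResidueRecord p c y u ∨ IsResidueRecord p (-c) y u) ∧ u + y ≤ p ∧ u + 2 ≤ p := by
  have hdet := h.det
  have hA : 1 ≤ A := h.left_pos
  have hB : B ≤ x * B := le_mul_of_one_le_left h.right_nonneg hx
  have hy_le : y ≤ y * A := le_mul_of_one_le_right hy.le hA
  have hA_le : A ≤ y * A := le_mul_of_one_le_left (by omega) hy
  by_cases hBp : B + 2 ≤ p
  · exact ⟨B, .inr (h.isResidueRecord hx.le hy), by omega, hBp⟩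
  · -- Here `y = 1` is reached by `-c` too late, but by `c` already at time `1`.
    obtain rfl : y = 1 := by omega
    obtain rfl : A = 1 := by omega
    obtain rfl : x = 1 := by nlinarith
    exact ⟨1, .inl ⟨hy, zero_le_one, h.modEq_left, by omega⟩, by omega, by omega⟩

end EuclidState

namespace IsRemainderSeq

theorem of_quotients {Z : ℕ → ℤ} (hp : 0 < p) (hr0 : r 0 = p) (hr1 : r 1 = q % p)
    (hrec : ∀ k < t, r k = Z (k + 1) * r (k + 1) + r (k + 2) ∧
      0 ≤ r (k + 2) ∧ r (k + 2) < r (k + 1)) (hrt : r t = 1) :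
    IsRemainderSeq p q r t ∧ ∀ k < t, r k / r (k + 1) = Z (k + 1) := by
  have hpos : ∀ k < t, 0 < r (k + 1) := fun k hk => (hrec k hk).2.1.trans_lt (hrec k hk).2.2
  have hdiv : ∀ k < t, r k / r (k + 1) = Z (k + 1) ∧ r k % r (k + 1) = r (k + 2) := fun k hk =>
    (Int.ediv_emod_unique (hpos k hk)).2 ⟨by linarith [(hrec k hk).1], (hrec k hk).2⟩
  refine ⟨⟨hr0, hr1, fun k hk => (hdiv k hk).2.symm, ?_, hrt⟩, fun k hk => (hdiv k hk).1⟩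
  rintro (_ | k) hk
  · rwa [hr0]
  · exact hpos k hk

theorem succ_lt (h : IsRemainderSeq p q r t) (hk : k ≤ t) : r (k + 1) < r k := by
  have hpos := h.pos k hk
  cases k with
  | zero => simpa [h.one, h.zero] using Int.emod_lt_of_pos q (h.zero ▸ hpos)
  | succ k => exact h.add_two k hk ▸ Int.emod_lt_of_pos (r k) hpos

theorem exists_euclidState (h : IsRemainderSeq p q r t) (hk : k ≤ t) :
    ∃ A B, EuclidState p ((-1) ^ k * q) (r (k + 1)) (r k) A B := by
  induction k with
  | zero => exact ⟨1, 0, by simpa [h.zero, h.one] using EuclidState.initial p q⟩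
  | succ k ih =>
    obtain ⟨A, B, hstate⟩ := ih (by omega)
    have hnext := hstate.emod (h.pos (k + 1) hk) (h.succ_lt (by omega)).le
    rw [← h.add_two k hk, neg_mul_eq_neg_mul, ← mul_neg_one, ← pow_succ] at hnext
    exact ⟨_, _, hnext⟩

theorem one_mem_subtractiveRemainders (h : IsRemainderSeq p q r t) (hp : p ≠ 1) :
    1 ∈ subtractiveRemainders r t := by
  have hlast := h.last
  cases t with
  | zero => exact absurd (h.zero.symm.trans hlast) hp
  | succ t =>
    have hpos := h.pos t (by omega)
    exact ⟨t, by omega, r t - 1, by omega, by simp [hlast], by simp [hlast]⟩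

theorem mem_subtractiveRemainders_of_isResidueRecord {k : ℕ} (h : IsRemainderSeq p q r t)
    (hp : p ≠ 1) (hrec : IsResidueRecord p (-((-1) ^ k * q)) d u) (hk : k ≤ t + 1) (hd : d ≤ r k) :
    d ∈ subtractiveRemainders r t := by
  have hd_pos := hrec.pos
  rcases lt_trichotomy k t with hkt | rfl | hkt
  · rcases lt_or_ge (r k % r (k + 1)) d with hlt | hge
    · obtain ⟨A, B, hstate⟩ := h.exists_euclidState hkt.le
      exact ⟨k, hkt, hstate.exists_eq_sub_mul_of_isResidueRecord (h.pos _ hkt) hrec hlt hd⟩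
    · rw [← h.add_two k hkt] at hge
      exact h.mem_subtractiveRemainders_of_isResidueRecord hp
        (by simpa [pow_add] using hrec) (by omega) hge
  · obtain rfl : d = 1 := by linarith [h.last]
    exact h.one_mem_subtractiveRemainders hp
  · obtain rfl : k = t + 1 := by omega
    linarith [h.succ_lt le_rfl, h.last]
termination_by t + 1 - k

theorem gapSet_subset_subtractiveRemainders (h : IsRemainderSeq p q r t) (hp : 1 < p)
    (hq : 0 ≤ q) : gapSet (pairSemigroup p q) ⊆ subtractiveRemainders r t := by
  have hp0 : 0 < p := by omega
  intro d hd
  rcases exists_isResidueRecord_of_mem_gapSet hp0 hq hd with ⟨u, hu, hrec⟩ | ⟨u, hrec⟩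
  · have ht : t ≠ 0 := by
      rintro rfl
      exact hp.ne' (h.zero.symm.trans h.last)
    have hr1 : 0 < q % p := h.one ▸ h.pos 1 (by omega)
    exact h.mem_subtractiveRemainders_of_isResidueRecord (k := 1) hp.ne' (by simpa using hrec)
      (by omega) (h.one ▸ hrec.le_emod hu hr1)
  · exact h.mem_subtractiveRemainders_of_isResidueRecord (k := 0) hp.ne' (by simpa using hrec)
      (by omega) (h.zero ▸ hrec.le_modulus hp0)

theorem subtractiveRemainders_subset_gapSet (h : IsRemainderSeq p q r t) (hp : 3 ≤ p)
    (hpq : p < q) :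
    subtractiveRemainders r t ⊆ gapSet (pairSemigroup p q ∩ Icc 0 ((p - 1) * (q - 1))) := by
  rintro d ⟨k, hk, z, hz, hzq, rfl⟩
  have hx := h.pos (k + 1) hk
  have hd : 0 < r k - z * r (k + 1) := by
    linarith [(Int.le_ediv_iff_mul_le hx).1 (Int.add_one_le_of_lt hzq)]
  obtain ⟨A, B, hstate⟩ := h.exists_euclidState hk.le
  obtain ⟨u, hrec, hud, hu⟩ := (hstate.sub_mul hz).exists_isResidueRecord_time_le hx hd hp
  refine IsResidueRecord.mem_gapSet_Icc_conductor (u := u) ?_ (by omega) hpq hud hu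
  rcases neg_one_pow_eq_or ℤ k with hsign | hsign
  · simpa [hsign] using hrec
  · simpa [hsign] using hrec.symm

theorem gapSet_eq_subtractiveRemainders (h : IsRemainderSeq p q r t) (hp : 3 ≤ p) (hpq : p < q) :
    gapSet (pairSemigroup p q ∩ Icc 0 ((p - 1) * (q - 1))) = subtractiveRemainders r t :=
  ((gapSet_inter_subset ordConnected_Icc).trans
    (h.gapSet_subset_subtractiveRemainders (by omega) (by omega))).antisymm
    (h.subtractiveRemainders_subset_gapSet hp hpq)

end IsRemainderSeq

/-- Theorem 1(ii): `S_Δ(p,q) = {r_{i-1} - z·r_i : 1 ≤ i ≤ t, 0 ≤ z ≤ Z_i - 1}`,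
where `(r_i)` and `(Z_i)` are the Euclidean algorithm sequences with `r₀ = p` and
`r₁ = ⟨q⟩_p`. -/
theorem stmt_13 (p q : ℤ) (hp : 3 ≤ p) (hpq : p < q) (hcop : IsCoprime p q)
    (θ : ℕ) (hθ : (θ : ℤ) * 2 = (p - 1) * (q - 1))
    (ℓ : ℕ → ℤ)
    (hℓmem : ∀ j : ℕ, j ≤ θ →
      (∃ a b : ℤ, 0 ≤ a ∧ 0 ≤ b ∧ ℓ j = a * q + b * p) ∧
      0 ≤ ℓ j ∧ ℓ j ≤ (p - 1) * (q - 1))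
    (hℓsurj : ∀ m : ℤ, (∃ a b : ℤ, 0 ≤ a ∧ 0 ≤ b ∧ m = a * q + b * p) →
      0 ≤ m → m ≤ (p - 1) * (q - 1) → ∃ j : ℕ, j ≤ θ ∧ ℓ j = m)
    (hℓmono : ∀ i j : ℕ, i < j → j ≤ θ → ℓ i < ℓ j)
    (t : ℕ) (ht : 1 ≤ t) (r Z : ℕ → ℤ)
    (hr0 : r 0 = p) (hr1 : r 1 = q % p)
    (hrec : ∀ i, 1 ≤ i → i ≤ t →
      r (i - 1) = Z i * r i + r (i + 1) ∧ 0 ≤ r (i + 1) ∧ r (i + 1) < r i)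
    (hrt : r t = 1) :
    {d : ℤ | ∃ j : ℕ, j < θ ∧ d = ℓ (j + 1) - ℓ j} =
    {d : ℤ | ∃ i : ℕ, 1 ≤ i ∧ i ≤ t ∧
      ∃ z : ℤ, 0 ≤ z ∧ z ≤ Z i - 1 ∧ d = r (i - 1) - z * r i} := by
  have hℓ : StrictMonoOn ℓ (Iic θ) := fun i _ j hj hij => hℓmono i j hij hj
  have himage : ℓ '' Iic θ = pairSemigroup p q ∩ Icc 0 ((p - 1) * (q - 1)) := by
    refine Subset.antisymm (image_subset_iff.2 hℓmem) ?_
    rintro m ⟨hm, hm0, hm1⟩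
    exact hℓsurj m hm hm0 hm1
  obtain ⟨hr, hZ⟩ := IsRemainderSeq.of_quotients (by omega) hr0 hr1
    (fun k hk => hrec (k + 1) (by omega) hk) hrt
  rw [← gapSet_image_Iic hℓ, himage, hr.gapSet_eq_subtractiveRemainders hp hpq]
  ext d
  constructor
  · rintro ⟨k, hk, z, hz, hzZ, rfl⟩
    exact ⟨k + 1, by omega, hk, z, hz, by linarith [hZ k hk], rfl⟩
  · rintro ⟨_ | k, hi, hk, z, hz, hzZ, rfl⟩
    · omega
    · exact ⟨k, hk, z, hz, by linarith [hZ k hk], rfl⟩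
end
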